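/- Fix y ∈ ℝⁿ∖{0} and assume Π > 0 and Γ > 0 at the corresponding (s,s̄). Let B ∈ ℝ and B_1,…,B_n ∈ ℝ with B_iy^i = 0 be given. Then the system of algebraic equations ℓ_{ir}A^r = B_i (i = 1,…,n) and ℓ_rA^r = B has a unique solution A = (A^r) ∈ ℝⁿ, and it is given by A^i = (α_rA^r)·α^i + (α/Π)·B^i − (α/(ΠΓ))·(μ₁h^i + μ₂h̄^i), where B^i = a^{il}B_l, h^i = a^{il}h_l, h̄^i = a^{il}h̄_l, α^i = a^{il}α_l = y^i/α, μ₁ = [Ψ_ss + (g²−s̄²)J]·B_rb^r + [Ψ_ss̄ − (θ−ss̄)J]·B_rγ^r, μ₂ = [Ψ_s̄s̄ + (b²−s²)J]·B_rγ^r + [Ψ_ss̄ − (θ−ss̄)J]·B_rb^r, and α_rA^r = (1/Ψ)·{ B − (α/(ΠΓ))·( Ψ_s[Π + (θ−ss̄)Ψ_ss̄ + (g²−s̄²)Ψ_s̄s̄] − Ψ_s̄[(θ−ss̄)Ψ_ss + (g²−s̄²)Ψ_ss̄] )·B_rb^r − (α/(ΠΓ))·( Ψ_s̄[Π + (b²−s²)Ψ_ss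 + (θ−ss̄)Ψ_ss̄] − Ψ_s[(b²−s²)Ψ_ss̄ + (θ−ss̄)Ψ_s̄s̄] )·B_rγ^r }, with b^r = a^{rl}b_l, γ^r = a^{rl}γ_l. -/

import Mathlib

noncomputable section

open Set

/-- `a^{ij} u_i v_j` : the pairing of two covectors via the inverse matrix. -/
def quadInv {n : ℕ} (a : Matrix (Fin n) (Fin n) ℝ) (u v : Fin n → ℝ) : ℝ :=
  ∑ i, ∑ j, a⁻¹ i j * u i * v j

/-- `α(y) = √(a_{ij} y^i y^j)`. -/
def alph {n : ℕ} (a : Matrix (Fin n) (Fin n) ℝ) (y : Fin n → ℝ) : ℝ :=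
  Real.sqrt (∑ i, ∑ j, a i j * y i * y j)

/-- `v_i y^i`. -/
def oneForm {n : ℕ} (v y : Fin n → ℝ) : ℝ := ∑ i, v i * y i

/-- `s(y) = v_i y^i / α(y)`. -/
def sVar {n : ℕ} (a : Matrix (Fin n) (Fin n) ℝ) (v y : Fin n → ℝ) : ℝ :=
  oneForm v y / alph a y

/-- The (α,β,γ)-metric `F(y) = α·Ψ(s, s̄)`. -/
def Fm {n : ℕ} (a : Matrix (Fin n) (Fin n) ℝ) (bv gv : Fin n → ℝ)
    (Ψ : ℝ → ℝ → ℝ) (y : Fin n → ℝ) : ℝ :=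
  alph a y * Ψ (sVar a bv y) (sVar a gv y)

/-- Partial derivative of a function on `ℝⁿ` in the `i`-th coordinate direction. -/
def pd {n : ℕ} (f : (Fin n → ℝ) → ℝ) (y : Fin n → ℝ) (i : Fin n) : ℝ :=
  fderiv ℝ f y (Pi.single i 1)

/-- Second partial derivative. -/
def pd2 {n : ℕ} (f : (Fin n → ℝ) → ℝ) (y : Fin n → ℝ) (i j : Fin n) : ℝ :=
  pd (fun z => pd f z j) y i

/-- Partial derivative with respect to the first slot (`∂/∂s`). -/
def Ds (Ψ : ℝ → ℝ → ℝ) : ℝ → ℝ → ℝ := fun p q => deriv (fun u => Ψ u q) p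

/-- Partial derivative with respect to the second slot (`∂/∂s̄`). -/
def Dt (Ψ : ℝ → ℝ → ℝ) : ℝ → ℝ → ℝ := fun p q => deriv (fun v => Ψ p v) q

/-- `h_i = v_i − s·α_i`. -/
def hl {n : ℕ} (a : Matrix (Fin n) (Fin n) ℝ) (v y : Fin n → ℝ) (i : Fin n) : ℝ :=
  v i - sVar a v y * pd (alph a) y i

/-- Fundamental tensor `g_{ij} = ½ ∂²(F²)/∂yⁱ∂yʲ`. -/
def fundT {n : ℕ} (F : (Fin n → ℝ) → ℝ) (y : Fin n → ℝ) (i j : Fin n) : ℝ :=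
  (1 / 2) * pd2 (fun z => F z ^ 2) y i j

/-- `Π = Ψ − sΨ_s − s̄Ψ_s̄`. -/
def PiF (Ψ : ℝ → ℝ → ℝ) (p q : ℝ) : ℝ := Ψ p q - p * Ds Ψ p q - q * Dt Ψ p q

/-- `J = (Ψ_ss Ψ_s̄s̄ − Ψ_ss̄²)/Π`. -/
def JF (Ψ : ℝ → ℝ → ℝ) (p q : ℝ) : ℝ :=
  (Ds (Ds Ψ) p q * Dt (Dt Ψ) p q - Dt (Ds Ψ) p q ^ 2) / PiF Ψ p q

/-- `Γ`, with `B = b²`, `G = g²`, `Θ = θ` as real parameters. -/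
def GammaF (Ψ : ℝ → ℝ → ℝ) (B G Θ p q : ℝ) : ℝ :=
  PiF Ψ p q + (B - p ^ 2) * Ds (Ds Ψ) p q + (G - q ^ 2) * Dt (Dt Ψ) p q
    + 2 * (Θ - p * q) * Dt (Ds Ψ) p q
    + ((B - p ^ 2) * (G - q ^ 2) - (Θ - p * q) ^ 2) * JF Ψ p q

/-- `ρ = Ψ(Ψ − sΨ_s − s̄Ψ_s̄)`. -/
def rhoF (Ψ : ℝ → ℝ → ℝ) : ℝ → ℝ → ℝ := fun p q => Ψ p q * PiF Ψ p q

/-- `ρ₀ = ΨΨ_ss + Ψ_s²`. -/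
def rho0F (Ψ : ℝ → ℝ → ℝ) : ℝ → ℝ → ℝ := fun p q => Ψ p q * Ds (Ds Ψ) p q + Ds Ψ p q ^ 2

/-- `ρ̄₀ = ΨΨ_s̄s̄ + Ψ_s̄²`. -/
def rhobar0F (Ψ : ℝ → ℝ → ℝ) : ℝ → ℝ → ℝ := fun p q => Ψ p q * Dt (Dt Ψ) p q + Dt Ψ p q ^ 2

/-- `ρ₃ = ΨΨ_ss̄ + Ψ_sΨ_s̄`. -/
def rho3F (Ψ : ℝ → ℝ → ℝ) : ℝ → ℝ → ℝ :=
  fun p q => Ψ p q * Dt (Ds Ψ) p q + Ds Ψ p q * Dt Ψ p q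

/-- `ρ₁ = ΨΨ_s − sρ₀ − s̄ρ₃`. -/
def rho1F (Ψ : ℝ → ℝ → ℝ) : ℝ → ℝ → ℝ :=
  fun p q => Ψ p q * Ds Ψ p q - p * rho0F Ψ p q - q * rho3F Ψ p q

/-- `ρ̄₁ = ΨΨ_s̄ − s̄ρ̄₀ − sρ₃`. -/
def rhobar1F (Ψ : ℝ → ℝ → ℝ) : ℝ → ℝ → ℝ :=
  fun p q => Ψ p q * Dt Ψ p q - q * rhobar0F Ψ p q - p * rho3F Ψ p q

/-- `ρ₂ = −sρ₁ − s̄ρ̄₁`. -/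
def rho2F (Ψ : ℝ → ℝ → ℝ) : ℝ → ℝ → ℝ :=
  fun p q => -p * rho1F Ψ p q - q * rhobar1F Ψ p q

/-- `π₁ = Ψ_s̄Ψ_ss̄ − Ψ_sΨ_s̄s̄ + sΨJ`. -/
def pi1F (Ψ : ℝ → ℝ → ℝ) (p q : ℝ) : ℝ :=
  Dt Ψ p q * Dt (Ds Ψ) p q - Ds Ψ p q * Dt (Dt Ψ) p q + p * Ψ p q * JF Ψ p q

/-- `π₂ = Ψ_sΨ_ss̄ − Ψ_s̄Ψ_ss + s̄ΨJ`. -/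
def pi2F (Ψ : ℝ → ℝ → ℝ) (p q : ℝ) : ℝ :=
  Ds Ψ p q * Dt (Ds Ψ) p q - Dt Ψ p q * Ds (Ds Ψ) p q + q * Ψ p q * JF Ψ p q

/-! ### Gradient calculus -/

/-- The linear functional with coefficients `w`. -/
def linF {n : ℕ} (w : Fin n → ℝ) : (Fin n → ℝ) →L[ℝ] ℝ :=
  ∑ i, w i • ContinuousLinearMap.proj (R := ℝ) (φ := fun _ : Fin n => ℝ) i

lemma linF_apply {n : ℕ} (w v : Fin n → ℝ) : linF w v = ∑ i, w i * v i := by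
  simp [linF]

lemma linF_single {n : ℕ} (w : Fin n → ℝ) (i : Fin n) : linF w (Pi.single i 1) = w i := by
  rw [linF_apply]
  simp [Pi.single_apply]

/-- `f` has gradient `w` at `y`. -/
def HasGrad {n : ℕ} (f : (Fin n → ℝ) → ℝ) (w y : Fin n → ℝ) : Prop :=
  HasFDerivAt f (linF w) y

lemma HasGrad.pd_eq {n : ℕ} {f : (Fin n → ℝ) → ℝ} {w y : Fin n → ℝ} (h : HasGrad f w y)
    (i : Fin n) : pd f y i = w i := by
  unfold pd
  rw [HasFDerivAt.fderiv h, linF_single]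

lemma HasGrad.of_fderiv {n : ℕ} {f : (Fin n → ℝ) → ℝ} {w y : Fin n → ℝ}
    {L : (Fin n → ℝ) →L[ℝ] ℝ} (h : HasFDerivAt f L y) (hw : ∀ v, L v = ∑ i, w i * v i) :
    HasGrad f w y := by
  have : L = linF w := by
    ext1 v
    rw [hw, linF_apply]
  unfold HasGrad
  rw [← this]
  exact h

lemma hasGrad_oneForm {n : ℕ} (v y : Fin n → ℝ) : HasGrad (oneForm v) v y := by
  have : oneForm v = fun z => linF v z := by
    funext z
    rw [linF_apply]
    rfl
  unfold HasGrad
  rw [this]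
  exact (linF v).hasFDerivAt

lemma HasGrad.mul {n : ℕ} {f g : (Fin n → ℝ) → ℝ} {u w y : Fin n → ℝ}
    (hf : HasGrad f u y) (hg : HasGrad g w y) :
    HasGrad (fun z => f z * g z) (fun i => u i * g y + f y * w i) y := by
  refine HasGrad.of_fderiv (HasFDerivAt.mul hf hg) fun v => ?_
  simp only [_root_.add_apply, _root_.smul_apply, linF_apply,
    smul_eq_mul, Finset.mul_sum, ← Finset.sum_add_distrib]
  exact Finset.sum_congr rfl fun i _ => by ring

lemma HasGrad.add {n : ℕ} {f g : (Fin n → ℝ) → ℝ} {u w y : Fin n → ℝ}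
    (hf : HasGrad f u y) (hg : HasGrad g w y) :
    HasGrad (fun z => f z + g z) (fun i => u i + w i) y := by
  refine HasGrad.of_fderiv (HasFDerivAt.add hf hg) fun v => ?_
  simp only [_root_.add_apply, linF_apply, ← Finset.sum_add_distrib]
  exact Finset.sum_congr rfl fun i _ => by ring

lemma HasGrad.sub {n : ℕ} {f g : (Fin n → ℝ) → ℝ} {u w y : Fin n → ℝ}
    (hf : HasGrad f u y) (hg : HasGrad g w y) :
    HasGrad (fun z => f z - g z) (fun i => u i - w i) y := by
  refine HasGrad.of_fderiv (HasFDerivAt.sub hf hg) fun v => ?_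
  simp only [_root_.sub_apply, linF_apply, ← Finset.sum_sub_distrib]
  exact Finset.sum_congr rfl fun i _ => by ring

lemma HasGrad.mul_const {n : ℕ} {f : (Fin n → ℝ) → ℝ} {u y : Fin n → ℝ}
    (hf : HasGrad f u y) (c : ℝ) :
    HasGrad (fun z => f z * c) (fun i => u i * c) y := by
  refine HasGrad.of_fderiv (HasFDerivAt.mul_const hf c) fun v => ?_
  simp only [_root_.smul_apply, linF_apply, smul_eq_mul, Finset.mul_sum]
  exact Finset.sum_congr rfl fun i _ => by ring

lemma HasGrad.comp1 {n : ℕ} {f : (Fin n → ℝ) → ℝ} {u y : Fin n → ℝ} {φ : ℝ → ℝ} {d : ℝ}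
    (hf : HasGrad f u y) (hφ : HasDerivAt φ d (f y)) :
    HasGrad (fun z => φ (f z)) (fun i => d * u i) y := by
  refine HasGrad.of_fderiv (HasDerivAt.comp_hasFDerivAt y hφ hf) fun v => ?_
  simp only [_root_.smul_apply, linF_apply, smul_eq_mul, Finset.mul_sum]
  exact Finset.sum_congr rfl fun i _ => by ring

lemma Ds_eq {Φ : ℝ → ℝ → ℝ} {p q : ℝ}
    (h : DifferentiableAt ℝ (fun x : ℝ × ℝ => Φ x.1 x.2) (p, q)) :
    Ds Φ p q = fderiv ℝ (fun x : ℝ × ℝ => Φ x.1 x.2) (p, q) (1, 0) := by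
  have h1 : HasDerivAt (fun u : ℝ => (u, q)) ((1 : ℝ), (0 : ℝ)) p :=
    (hasDerivAt_id p).prodMk (hasDerivAt_const p q)
  have h2 := HasFDerivAt.comp_hasDerivAt (f := fun u : ℝ => (u, q)) p h.hasFDerivAt h1
  exact h2.deriv

lemma Dt_eq {Φ : ℝ → ℝ → ℝ} {p q : ℝ}
    (h : DifferentiableAt ℝ (fun x : ℝ × ℝ => Φ x.1 x.2) (p, q)) :
    Dt Φ p q = fderiv ℝ (fun x : ℝ × ℝ => Φ x.1 x.2) (p, q) (0, 1) := by
  have h1 : HasDerivAt (fun u : ℝ => (p, u)) ((0 : ℝ), (1 : ℝ)) q :=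
    (hasDerivAt_const q p).prodMk (hasDerivAt_id q)
  have h2 := HasFDerivAt.comp_hasDerivAt (f := fun u : ℝ => (p, u)) q h.hasFDerivAt h1
  exact h2.deriv

lemma HasGrad.comp2 {n : ℕ} {f g : (Fin n → ℝ) → ℝ} {u w y : Fin n → ℝ} {Φ : ℝ → ℝ → ℝ}
    (hf : HasGrad f u y) (hg : HasGrad g w y)
    (h : DifferentiableAt ℝ (fun x : ℝ × ℝ => Φ x.1 x.2) (f y, g y)) :
    HasGrad (fun z => Φ (f z) (g z))
      (fun i => Ds Φ (f y) (g y) * u i + Dt Φ (f y) (g y) * w i) y := by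
  have h1 : HasFDerivAt (fun z => (f z, g z)) ((linF u).prod (linF w)) y :=
    HasFDerivAt.prodMk hf hg
  have h2 := HasFDerivAt.comp y (f := fun z => (f z, g z)) h.hasFDerivAt h1
  refine HasGrad.of_fderiv h2 fun v => ?_
  have e : ((linF u).prod (linF w)) v = linF u v • ((1 : ℝ), (0 : ℝ)) + linF w v • ((0 : ℝ), (1 : ℝ)) := by
    simp
  rw [ContinuousLinearMap.comp_apply, e, map_add, map_smul, map_smul, ← Ds_eq h, ← Dt_eq h]
  simp only [linF_apply, smul_eq_mul, Finset.sum_mul, ← Finset.sum_add_distrib]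
  exact Finset.sum_congr rfl fun i _ => by ring

/-! ### Regularity of the partial derivatives -/

lemma contDiffOn_Ds {Φ : ℝ → ℝ → ℝ} {U : Set (ℝ × ℝ)} (hU : IsOpen U)
    (h : ContDiffOn ℝ (⊤ : ℕ∞) (fun x : ℝ × ℝ => Φ x.1 x.2) U) :
    ContDiffOn ℝ (⊤ : ℕ∞) (fun x : ℝ × ℝ => Ds Φ x.1 x.2) U := by
  have h1 : ContDiffOn ℝ (⊤ : ℕ∞) (fderiv ℝ (fun x : ℝ × ℝ => Φ x.1 x.2)) U :=
    h.fderiv_of_isOpen hU (by simp)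
  refine (h1.clm_apply (contDiffOn_const (c := ((1 : ℝ), (0 : ℝ))))).congr fun x hx => ?_
  exact Ds_eq ((h.differentiableOn (by simp)).differentiableAt (hU.mem_nhds hx))

lemma contDiffOn_Dt {Φ : ℝ → ℝ → ℝ} {U : Set (ℝ × ℝ)} (hU : IsOpen U)
    (h : ContDiffOn ℝ (⊤ : ℕ∞) (fun x : ℝ × ℝ => Φ x.1 x.2) U) :
    ContDiffOn ℝ (⊤ : ℕ∞) (fun x : ℝ × ℝ => Dt Φ x.1 x.2) U := by
  have h1 : ContDiffOn ℝ (⊤ : ℕ∞) (fderiv ℝ (fun x : ℝ × ℝ => Φ x.1 x.2)) U :=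
    h.fderiv_of_isOpen hU (by simp)
  refine (h1.clm_apply (contDiffOn_const (c := ((0 : ℝ), (1 : ℝ))))).congr fun x hx => ?_
  exact Dt_eq ((h.differentiableOn (by simp)).differentiableAt (hU.mem_nhds hx))

lemma Ds_Dt_comm {Φ : ℝ → ℝ → ℝ} {U : Set (ℝ × ℝ)} (hU : IsOpen U)
    (h : ContDiffOn ℝ (⊤ : ℕ∞) (fun x : ℝ × ℝ => Φ x.1 x.2) U) {p q : ℝ} (hpq : (p, q) ∈ U) :
    Ds (Dt Φ) p q = Dt (Ds Φ) p q := by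
  have hd : ∀ x ∈ U, DifferentiableAt ℝ (fun x : ℝ × ℝ => Φ x.1 x.2) x := fun x hx =>
    (h.differentiableOn (by simp)).differentiableAt (hU.mem_nhds hx)
  have h1 : ContDiffOn ℝ (⊤ : ℕ∞) (fderiv ℝ (fun x : ℝ × ℝ => Φ x.1 x.2)) U :=
    h.fderiv_of_isOpen hU (by simp)
  have h1d : DifferentiableAt ℝ (fderiv ℝ (fun x : ℝ × ℝ => Φ x.1 x.2)) (p, q) :=
    (h1.differentiableOn (by simp)).differentiableAt (hU.mem_nhds hpq)
  have hsymm : IsSymmSndFDerivAt ℝ (fun x : ℝ × ℝ => Φ x.1 x.2) (p, q) :=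
    (h.contDiffAt (hU.mem_nhds hpq)).isSymmSndFDerivAt (by
      simp only [minSmoothness_of_isRCLikeNormedField]
      exact WithTop.coe_le_coe.2 (le_top : (2 : ℕ∞) ≤ ⊤))
  have eS : (fun x : ℝ × ℝ => Ds Φ x.1 x.2) =ᶠ[nhds (p, q)]
      fun x => fderiv ℝ (fun x : ℝ × ℝ => Φ x.1 x.2) x (1, 0) := by
    filter_upwards [hU.mem_nhds hpq] with x hx
    exact Ds_eq (hd x hx)
  have eT : (fun x : ℝ × ℝ => Dt Φ x.1 x.2) =ᶠ[nhds (p, q)]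
      fun x => fderiv ℝ (fun x : ℝ × ℝ => Φ x.1 x.2) x (0, 1) := by
    filter_upwards [hU.mem_nhds hpq] with x hx
    exact Dt_eq (hd x hx)
  rw [Ds_eq (((contDiffOn_Dt hU h).differentiableOn (by simp)).differentiableAt (hU.mem_nhds hpq)),
    Dt_eq (((contDiffOn_Ds hU h).differentiableOn (by simp)).differentiableAt (hU.mem_nhds hpq)),
    eS.fderiv_eq, eT.fderiv_eq, fderiv_clm_apply h1d (by fun_prop),
    fderiv_clm_apply h1d (by fun_prop)]
  simpa using hsymm (1, 0) (0, 1)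

/-! ### The Riemannian norm -/

/-- `α_i = a_{ij} y^j / α`. -/
def mC {n : ℕ} (a : Matrix (Fin n) (Fin n) ℝ) (y : Fin n → ℝ) (i : Fin n) : ℝ :=
  oneForm (a i) y / alph a y

lemma quad_eq {n : ℕ} (a : Matrix (Fin n) (Fin n) ℝ) (y : Fin n → ℝ) :
    (∑ i, ∑ j, a i j * y i * y j) = ∑ i, y i * oneForm (a i) y := by
  refine Finset.sum_congr rfl fun i _ => ?_
  rw [oneForm, Finset.mul_sum]
  exact Finset.sum_congr rfl fun j _ => by ring

lemma quad_pos {n : ℕ} {a : Matrix (Fin n) (Fin n) ℝ} (ha : a.PosDef) {y : Fin n → ℝ}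
    (hy : y ≠ 0) : 0 < ∑ i, ∑ j, a i j * y i * y j := by
  have := ha.dotProduct_mulVec_pos hy
  rw [quad_eq]
  simpa [dotProduct, Matrix.mulVec, oneForm] using this

lemma alph_pos {n : ℕ} {a : Matrix (Fin n) (Fin n) ℝ} (ha : a.PosDef) {y : Fin n → ℝ}
    (hy : y ≠ 0) : 0 < alph a y := Real.sqrt_pos.2 (quad_pos ha hy)

lemma alph_sq {n : ℕ} {a : Matrix (Fin n) (Fin n) ℝ} (ha : a.PosDef) {y : Fin n → ℝ}
    (hy : y ≠ 0) : alph a y ^ 2 = ∑ i, y i * oneForm (a i) y := by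
  rw [← quad_eq]
  exact Real.sq_sqrt (quad_pos ha hy).le

lemma symm_apply {n : ℕ} {a : Matrix (Fin n) (Fin n) ℝ} (ha : a.PosDef) (i j : Fin n) :
    a i j = a j i := by
  have := ha.isHermitian.apply i j
  simpa using this.symm

lemma HasGrad.sum {n : ℕ} {f : Fin n → (Fin n → ℝ) → ℝ} {u : Fin n → Fin n → ℝ}
    {y : Fin n → ℝ} (h : ∀ k, HasGrad (f k) (u k) y) :
    HasGrad (fun z => ∑ k, f k z) (fun i => ∑ k, u k i) y := by
  have := HasFDerivAt.fun_sum (u := Finset.univ) (A := f) (A' := fun k => linF (u k)) (x := y)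
    fun k _ => h k
  refine HasGrad.of_fderiv this fun v => ?_
  simp only [_root_.sum_apply, linF_apply, Finset.sum_mul]
  exact Finset.sum_comm

lemma hasGrad_coord {n : ℕ} (k : Fin n) (y : Fin n → ℝ) :
    HasGrad (fun z => z k) (fun i => if i = k then 1 else 0) y := by
  refine HasGrad.of_fderiv (hasFDerivAt_apply k y) fun v => ?_
  simp

lemma hasGrad_alph {n : ℕ} {a : Matrix (Fin n) (Fin n) ℝ} (ha : a.PosDef) {y : Fin n → ℝ}
    (hy : y ≠ 0) : HasGrad (alph a) (mC a y) y := by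
  have h1 : HasGrad (fun z => ∑ k, z k * oneForm (a k) z)
      (fun i => ∑ k, ((if i = k then 1 else 0) * oneForm (a k) y + y k * a k i)) y :=
    HasGrad.sum fun k => (hasGrad_coord k y).mul (hasGrad_oneForm (a k) y)
  have hp := quad_pos ha hy
  rw [quad_eq] at hp
  have h2 := h1.comp1 (Real.hasDerivAt_sqrt hp.ne')
  have e1 : alph a = fun z => √(∑ k, z k * oneForm (a k) z) := by
    funext z
    rw [alph, quad_eq]
  have e2 : mC a y = fun i => 1 / (2 * √(∑ k, y k * oneForm (a k) y)) *
      ∑ k, ((if i = k then 1 else 0) * oneForm (a k) y + y k * a k i) := by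
    funext i
    have : ∑ k, ((if i = k then 1 else 0) * oneForm (a k) y + y k * a k i)
        = 2 * oneForm (a i) y := by
      rw [Finset.sum_add_distrib]
      have : ∑ k, y k * a k i = oneForm (a i) y := by
        refine Finset.sum_congr rfl fun k _ => ?_
        rw [symm_apply ha k i]
        ring
      rw [this]
      simp
      ring
    rw [this, mC, e1]
    field_simp
  rw [e1, e2]
  exact h2

lemma hasGrad_sVar {n : ℕ} {a : Matrix (Fin n) (Fin n) ℝ} (ha : a.PosDef) (v : Fin n → ℝ)
    {y : Fin n → ℝ} (hy : y ≠ 0) :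
    HasGrad (sVar a v) (fun i => (v i - sVar a v y * mC a y i) / alph a y) y := by
  have hα := alph_pos ha hy
  have h := (hasGrad_oneForm v y).mul ((hasGrad_alph ha hy).comp1 (hasDerivAt_inv hα.ne'))
  have e1 : sVar a v = fun z => oneForm v z * (alph a z)⁻¹ := by
    funext z
    rw [sVar, div_eq_mul_inv]
  have e2 : (fun i => (v i - sVar a v y * mC a y i) / alph a y) =
      fun i => v i * (alph a y)⁻¹ + oneForm v y * (-(alph a y ^ 2)⁻¹ * mC a y i) := by
    funext i
    rw [sVar]
    field_simp
    ring
  rw [e2, e1]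
  exact h

lemma hasGrad_mC {n : ℕ} {a : Matrix (Fin n) (Fin n) ℝ} (ha : a.PosDef)
    {y : Fin n → ℝ} (hy : y ≠ 0) (j : Fin n) :
    HasGrad (fun z => mC a z j) (fun i => (a i j - mC a y i * mC a y j) / alph a y) y := by
  have h := hasGrad_sVar ha (a j) hy
  have e2 : (fun i => (a i j - mC a y i * mC a y j) / alph a y) =
     (fun i => (a j i - sVar a (a j) y * mC a y i) / alph a y) := by
    funext i
    rw [symm_apply ha i j, mul_comm (mC a y i)]
    rfl
  rw [e2]
  exact h

/-! ### First and second derivatives of the metric -/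

section metric
variable {n : ℕ} {a : Matrix (Fin n) (Fin n) ℝ} (bv gv : Fin n → ℝ)
  {Ψ : ℝ → ℝ → ℝ} {U : Set (ℝ × ℝ)}

lemma pd_Fm (ha : a.PosDef) (hU : IsOpen U)
    (hΨ : ContDiffOn ℝ (⊤ : ℕ∞) (fun x : ℝ × ℝ => Ψ x.1 x.2) U)
    (hm : ∀ z : Fin n → ℝ, z ≠ 0 → (sVar a bv z, sVar a gv z) ∈ U)
    {z : Fin n → ℝ} (hz : z ≠ 0) (j : Fin n) :
    pd (Fm a bv gv Ψ) z j =
      mC a z j * Ψ (sVar a bv z) (sVar a gv z)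
      + (Ds Ψ (sVar a bv z) (sVar a gv z) * (bv j - sVar a bv z * mC a z j)
        + Dt Ψ (sVar a bv z) (sVar a gv z) * (gv j - sVar a gv z * mC a z j)) := by
  have hα := alph_pos ha hz
  have hd := (hΨ.differentiableOn (by simp)).differentiableAt (hU.mem_nhds (hm z hz))
  have h := (hasGrad_alph ha hz).mul
    ((hasGrad_sVar ha bv hz).comp2 (hasGrad_sVar ha gv hz) hd)
  have h' : HasGrad (Fm a bv gv Ψ) _ z := h
  rw [h'.pd_eq]
  field_simp

lemma pd2_Fm (ha : a.PosDef) (hU : IsOpen U)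
    (hΨ : ContDiffOn ℝ (⊤ : ℕ∞) (fun x : ℝ × ℝ => Ψ x.1 x.2) U)
    (hm : ∀ z : Fin n → ℝ, z ≠ 0 → (sVar a bv z, sVar a gv z) ∈ U)
    {y : Fin n → ℝ} (hy : y ≠ 0) (i j : Fin n) :
    pd2 (Fm a bv gv Ψ) y i j =
      (1 / alph a y) * (PiF Ψ (sVar a bv y) (sVar a gv y) * (a i j - mC a y i * mC a y j)
       + Ds (Ds Ψ) (sVar a bv y) (sVar a gv y) *
          ((bv i - sVar a bv y * mC a y i) * (bv j - sVar a bv y * mC a y j))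
       + Dt (Ds Ψ) (sVar a bv y) (sVar a gv y) *
          ((bv i - sVar a bv y * mC a y i) * (gv j - sVar a gv y * mC a y j)
            + (gv i - sVar a gv y * mC a y i) * (bv j - sVar a bv y * mC a y j))
       + Dt (Dt Ψ) (sVar a bv y) (sVar a gv y) *
          ((gv i - sVar a gv y * mC a y i) * (gv j - sVar a gv y * mC a y j))) := by
  have hα := alph_pos ha hy
  have hmy := hU.mem_nhds (hm y hy)
  have hd := (hΨ.differentiableOn (by simp)).differentiableAt hmy
  have hds := ((contDiffOn_Ds hU hΨ).differentiableOn (by simp)).differentiableAt hmy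
  have hdt := ((contDiffOn_Dt hU hΨ).differentiableOn (by simp)).differentiableAt hmy
  have hs := hasGrad_sVar ha bv hy
  have ht := hasGrad_sVar ha gv hy
  have hmc := hasGrad_mC ha hy j
  have hcst : ∀ c : ℝ, HasGrad (fun _ : Fin n → ℝ => c) (fun _ => 0) y := fun c =>
    HasGrad.of_fderiv (hasFDerivAt_const c y) fun v => by simp
  have h := (hmc.mul (hs.comp2 ht hd)).add
    (((hs.comp2 ht hds).mul ((hcst (bv j)).sub (hs.mul hmc))).add
      ((hs.comp2 ht hdt).mul ((hcst (gv j)).sub (ht.mul hmc))))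
  have hev : (fun z => mC a z j * Ψ (sVar a bv z) (sVar a gv z)
      + (Ds Ψ (sVar a bv z) (sVar a gv z) * (bv j - sVar a bv z * mC a z j)
        + Dt Ψ (sVar a bv z) (sVar a gv z) * (gv j - sVar a gv z * mC a z j)))
      =ᶠ[nhds y] (fun z => pd (Fm a bv gv Ψ) z j) := by
    filter_upwards [isOpen_ne.mem_nhds hy] with z hz
    exact (pd_Fm bv gv ha hU hΨ hm hz j).symm
  have h3 := h.pd_eq i
  unfold pd at h3
  rw [hev.fderiv_eq] at h3
  change pd (fun z => pd (Fm a bv gv Ψ) z j) y i = _ at h3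
  rw [pd2, h3, Ds_Dt_comm hU hΨ (hm y hy), PiF]
  field_simp
  ring

end metric

/-! ### Linear algebra -/

open Matrix in
lemma inv_mulVec_symm {n : ℕ} {a : Matrix (Fin n) (Fin n) ℝ} (ha : a.PosDef) (u w : Fin n → ℝ) :
    u ⬝ᵥ (a⁻¹ *ᵥ w) = w ⬝ᵥ (a⁻¹ *ᵥ u) := by
  have h : (a⁻¹)ᵀ = a⁻¹ := by
    have := ha.inv.isHermitian.eq
    simpa [Matrix.conjTranspose_eq_transpose_of_trivial] using this
  rw [Matrix.dotProduct_mulVec, ← Matrix.mulVec_transpose, h, dotProduct_comm]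

open Matrix in
lemma mulVec_inv {n : ℕ} {a : Matrix (Fin n) (Fin n) ℝ} (ha : a.PosDef) (w : Fin n → ℝ) :
    a *ᵥ (a⁻¹ *ᵥ w) = w := by
  rw [Matrix.mulVec_mulVec, Matrix.mul_nonsing_inv _ (a.isUnit_iff_isUnit_det.1 ha.isUnit),
    Matrix.one_mulVec]

open Matrix in
lemma inv_mulVec_mulVec {n : ℕ} {a : Matrix (Fin n) (Fin n) ℝ} (ha : a.PosDef) (w : Fin n → ℝ) :
    a⁻¹ *ᵥ (a *ᵥ w) = w := by
  rw [Matrix.mulVec_mulVec, Matrix.nonsing_inv_mul _ (a.isUnit_iff_isUnit_det.1 ha.isUnit),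
    Matrix.one_mulVec]

open Matrix in
lemma quadInv_eq {n : ℕ} (a : Matrix (Fin n) (Fin n) ℝ) (u v : Fin n → ℝ) :
    quadInv a u v = u ⬝ᵥ (a⁻¹ *ᵥ v) := by
  simp only [quadInv, dotProduct, Matrix.mulVec, Finset.mul_sum]
  exact Finset.sum_congr rfl fun i _ => Finset.sum_congr rfl fun j _ => by ring

open Matrix in
lemma mulVec_y {n : ℕ} {a : Matrix (Fin n) (Fin n) ℝ} (ha : a.PosDef) {y : Fin n → ℝ}
    (hy : y ≠ 0) : a *ᵥ y = alph a y • mC a y := by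
  have hα := alph_pos ha hy
  funext i
  simp only [Pi.smul_apply, smul_eq_mul, mC]
  field_simp
  rfl

open Matrix in
lemma inv_mC {n : ℕ} {a : Matrix (Fin n) (Fin n) ℝ} (ha : a.PosDef) {y : Fin n → ℝ}
    (hy : y ≠ 0) : a⁻¹ *ᵥ mC a y = (1 / alph a y) • y := by
  have hα := alph_pos ha hy
  have h : mC a y = (1 / alph a y) • (a *ᵥ y) := by
    rw [mulVec_y ha hy, smul_smul]
    field_simp
    simp
  rw [h, Matrix.mulVec_smul, inv_mulVec_mulVec ha]

open Matrix in
lemma mC_dot {n : ℕ} {a : Matrix (Fin n) (Fin n) ℝ} (ha : a.PosDef) {y : Fin n → ℝ}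
    (hy : y ≠ 0) : mC a y ⬝ᵥ y = alph a y := by
  have hα := alph_pos ha hy
  have h1 : y ⬝ᵥ (a *ᵥ y) = alph a y ^ 2 := by
    rw [alph_sq ha hy]
    rfl
  rw [mulVec_y ha hy, dotProduct_smul, smul_eq_mul, dotProduct_comm] at h1
  have : alph a y * (mC a y ⬝ᵥ y - alph a y) = 0 := by linear_combination h1
  rcases mul_eq_zero.1 this with h | h
  · exact absurd h hα.ne'
  · linarith

open Matrix in
lemma dot_y {n : ℕ} {a : Matrix (Fin n) (Fin n) ℝ} (ha : a.PosDef) (v : Fin n → ℝ)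
    {y : Fin n → ℝ} (hy : y ≠ 0) : v ⬝ᵥ y = sVar a v y * alph a y := by
  have hα := alph_pos ha hy
  rw [sVar]
  field_simp
  rfl

open Matrix in
lemma h_pair {n : ℕ} {a : Matrix (Fin n) (Fin n) ℝ} (ha : a.PosDef) (u v : Fin n → ℝ)
    {y : Fin n → ℝ} (hy : y ≠ 0) :
    (u - sVar a u y • mC a y) ⬝ᵥ (a⁻¹ *ᵥ (v - sVar a v y • mC a y))
      = quadInv a u v - sVar a u y * sVar a v y := by
  have hα := alph_pos ha hy
  have e1 : mC a y ⬝ᵥ (a⁻¹ *ᵥ v) = sVar a v y := by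
    rw [inv_mulVec_symm ha, inv_mC ha hy, dotProduct_smul, dot_y ha v hy, smul_eq_mul]
    field_simp
  rw [Matrix.mulVec_sub, Matrix.mulVec_smul, inv_mC ha hy, quadInv_eq]
  simp only [sub_dotProduct, dotProduct_sub, smul_dotProduct, dotProduct_smul, smul_eq_mul, e1,
    dot_y ha u hy, mC_dot ha hy]
  field_simp
  ring

open Matrix in
lemma sVar_sq_le {n : ℕ} {a : Matrix (Fin n) (Fin n) ℝ} (ha : a.PosDef) (v : Fin n → ℝ)
    {y : Fin n → ℝ} (hy : y ≠ 0) : sVar a v y ^ 2 ≤ quadInv a v v := by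
  have h := h_pair ha v v hy
  have h2 := ha.inv.posSemidef.dotProduct_mulVec_nonneg (v - sVar a v y • mC a y)
  simp only [star_trivial] at h2
  nlinarith

lemma sVar_mem {n : ℕ} {a : Matrix (Fin n) (Fin n) ℝ} (ha : a.PosDef) (v : Fin n → ℝ)
    {y : Fin n → ℝ} (hy : y ≠ 0) {c : ℝ} (hc : √(quadInv a v v) < c) :
    sVar a v y ∈ Set.Ioo (-c) c := by
  have := abs_lt.1 (lt_of_le_of_lt (Real.abs_le_sqrt (sVar_sq_le ha v hy)) hc)
  exact this

open Matrix in
lemma core {n : ℕ} {a : Matrix (Fin n) (Fin n) ℝ} (ha : a.PosDef)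
    (y m H K Bv : Fin n → ℝ) (al Pp G J X Y Z P Q R Bb Bg Ps Psi_s Psi_t B c μ₁ μ₂ : ℝ)
    (hal : 0 < al) (hPi : 0 < Pp) (hG : 0 < G) (hPs : 0 < Ps)
    (hm : a *ᵥ y = al • m) (hmy : m ⬝ᵥ y = al) (hHy : H ⬝ᵥ y = 0) (hKy : K ⬝ᵥ y = 0)
    (hBy : Bv ⬝ᵥ y = 0)
    (hP : H ⬝ᵥ (a⁻¹ *ᵥ H) = P) (hQ : K ⬝ᵥ (a⁻¹ *ᵥ K) = Q) (hR : H ⬝ᵥ (a⁻¹ *ᵥ K) = R)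
    (hBb : Bv ⬝ᵥ (a⁻¹ *ᵥ H) = Bb) (hBg : Bv ⬝ᵥ (a⁻¹ *ᵥ K) = Bg)
    (hJ : Pp * J = X * Y - Z ^ 2)
    (hGd : G = Pp + P * X + Q * Y + 2 * R * Z + (P * Q - R ^ 2) * J)
    (hμ₁ : μ₁ = (X + Q * J) * Bb + (Z - R * J) * Bg)
    (hμ₂ : μ₂ = (Y + P * J) * Bg + (Z - R * J) * Bb)
    (hc : c = (1 / Ps) * (B
        - (al / (Pp * G)) * (Psi_s * (Pp + R * Z + Q * Y) - Psi_t * (R * X + Q * Z)) * Bb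
        - (al / (Pp * G)) * (Psi_t * (Pp + P * X + R * Z) - Psi_s * (P * Z + R * Y)) * Bg))
    (A : Fin n → ℝ) :
    (((Pp • (a *ᵥ A - (m ⬝ᵥ A) • m) + (X * (H ⬝ᵥ A) + Z * (K ⬝ᵥ A)) • H
        + (Z * (H ⬝ᵥ A) + Y * (K ⬝ᵥ A)) • K = al • Bv)
      ∧ Ps * (m ⬝ᵥ A) + Psi_s * (H ⬝ᵥ A) + Psi_t * (K ⬝ᵥ A) = B) ↔
    A = (c / al) • y + (al / Pp) • (a⁻¹ *ᵥ Bv)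
        - (al / (Pp * G)) • (μ₁ • (a⁻¹ *ᵥ H) + μ₂ • (a⁻¹ *ᵥ K))) ∧
    (A = (c / al) • y + (al / Pp) • (a⁻¹ *ᵥ Bv)
        - (al / (Pp * G)) • (μ₁ • (a⁻¹ *ᵥ H) + μ₂ • (a⁻¹ *ᵥ K)) → m ⬝ᵥ A = c) := by
  have hm' : a⁻¹ *ᵥ m = (1 / al) • y := by
    have h : m = (1 / al) • (a *ᵥ y) := by
      rw [hm, smul_smul]
      field_simp
      simp
    rw [h, Matrix.mulVec_smul, inv_mulVec_mulVec ha]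
  have hR' : K ⬝ᵥ (a⁻¹ *ᵥ H) = R := by rw [inv_mulVec_symm ha, hR]
  have hBb' : H ⬝ᵥ (a⁻¹ *ᵥ Bv) = Bb := by rw [inv_mulVec_symm ha, hBb]
  have hBg' : K ⬝ᵥ (a⁻¹ *ᵥ Bv) = Bg := by rw [inv_mulVec_symm ha, hBg]
  have hm0 : ∀ w : Fin n → ℝ, w ⬝ᵥ y = 0 → m ⬝ᵥ (a⁻¹ *ᵥ w) = 0 := by
    intro w hw
    rw [inv_mulVec_symm ha, hm', dotProduct_smul, hw, smul_zero]
  have hPi' := hPi.ne'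
  have hG' := hG.ne'
  have hal' := hal.ne'
  have hPs' := hPs.ne'
  have hdet : Pp * G = (Pp + X * P + Z * R) * (Pp + Z * R + Y * Q)
      - (Z * P + Y * R) * (X * R + Z * Q) := by
    rw [hGd]
    linear_combination (P * Q - R ^ 2) * hJ
  have hmA : A = (c / al) • y + (al / Pp) • (a⁻¹ *ᵥ Bv)
        - (al / (Pp * G)) • (μ₁ • (a⁻¹ *ᵥ H) + μ₂ • (a⁻¹ *ᵥ K)) → m ⬝ᵥ A = c := by
    intro hA
    rw [hA]
    simp only [dotProduct_add, dotProduct_sub, dotProduct_smul, smul_eq_mul, hmy,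
      hm0 _ hHy, hm0 _ hKy, hm0 _ hBy]
    field_simp
    ring
  refine ⟨?_, hmA⟩
  constructor
  · rintro ⟨h1, h2⟩
    set k := m ⬝ᵥ A with hk
    set u := H ⬝ᵥ A with hu
    set v := K ⬝ᵥ A with hv
    have hA : Pp • A = al • (a⁻¹ *ᵥ Bv) + (Pp * k / al) • y - (X * u + Z * v) • (a⁻¹ *ᵥ H)
        - (Z * u + Y * v) • (a⁻¹ *ᵥ K) := by
      have h3 : a⁻¹ *ᵥ (Pp • (a *ᵥ A - k • m) + (X * u + Z * v) • H
        + (Z * u + Y * v) • K) = a⁻¹ *ᵥ (al • Bv) := by rw [h1]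
      simp only [Matrix.mulVec_add, Matrix.mulVec_smul, Matrix.mulVec_sub,
        inv_mulVec_mulVec ha, hm'] at h3
      funext i
      have h4 := congrFun h3 i
      simp only [Pi.add_apply, Pi.sub_apply, Pi.smul_apply, smul_eq_mul] at h4 ⊢
      rw [← h4]
      field_simp
      ring
    have hHA : Pp * u = al * Bb - (X * u + Z * v) * P - (Z * u + Y * v) * R := by
      have := congrArg (fun w => H ⬝ᵥ w) hA
      simp only [dotProduct_add, dotProduct_sub, dotProduct_smul, smul_eq_mul, hHy, hP, hR,
        hBb', ← hu] at this
      linear_combination this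
    have hKA : Pp * v = al * Bg - (X * u + Z * v) * R - (Z * u + Y * v) * Q := by
      have := congrArg (fun w => K ⬝ᵥ w) hA
      simp only [dotProduct_add, dotProduct_sub, dotProduct_smul, smul_eq_mul, hKy, hQ, hR',
        hBg', ← hv] at this
      linear_combination this
    have hu1 : u * (Pp * G) = al * ((Pp + R * Z + Q * Y) * Bb - (P * Z + R * Y) * Bg) := by
      rw [hdet]
      linear_combination (Pp + R * Z + Q * Y) * hHA - (P * Z + R * Y) * hKA
    have hv1 : v * (Pp * G) = al * ((Pp + P * X + R * Z) * Bg - (R * X + Q * Z) * Bb) := by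
      rw [hdet]
      linear_combination (Pp + P * X + R * Z) * hKA - (R * X + Q * Z) * hHA
    have hX : (X * u + Z * v) * (Pp * G) = al * Pp * μ₁ := by
      rw [hμ₁]
      linear_combination X * hu1 + Z * hv1 - al * (Q * Bb - R * Bg) * hJ
    have hY : (Z * u + Y * v) * (Pp * G) = al * Pp * μ₂ := by
      rw [hμ₂]
      linear_combination Z * hu1 + Y * hv1 - al * (P * Bg - R * Bb) * hJ
    have hkc : k = c := by
      rw [hc]
      field_simp
      linear_combination Pp * G * h2 - Psi_s * hu1 - Psi_t * hv1
    funext i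
    have h4 := congrFun hA i
    simp only [Pi.add_apply, Pi.sub_apply, Pi.smul_apply, smul_eq_mul] at h4 ⊢
    rw [← hkc]
    have e1 : X * u + Z * v = al * μ₁ / G := by
      field_simp
      have : Pp * ((X * u + Z * v) * G - al * μ₁) = 0 := by linear_combination hX
      rcases mul_eq_zero.1 this with h | h
      · exact absurd h hPi'
      · linarith
    have e2 : Z * u + Y * v = al * μ₂ / G := by
      field_simp
      have : Pp * ((Z * u + Y * v) * G - al * μ₂) = 0 := by linear_combination hY
      rcases mul_eq_zero.1 this with h | h
      · exact absurd h hPi'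
      · linarith
    rw [e1, e2] at h4
    have : A i = (Pp * A i) / Pp := by field_simp
    rw [this, h4]
    field_simp
    ring
  · intro hA
    have hk := hmA hA
    have hHA : H ⬝ᵥ A = (al / Pp) * Bb - (al / (Pp * G)) * (μ₁ * P + μ₂ * R) := by
      rw [hA]
      simp only [dotProduct_add, dotProduct_sub, dotProduct_smul, smul_eq_mul, hHy, hP, hR,
        hBb']
      ring
    have hKA : K ⬝ᵥ A = (al / Pp) * Bg - (al / (Pp * G)) * (μ₁ * R + μ₂ * Q) := by
      rw [hA]
      simp only [dotProduct_add, dotProduct_sub, dotProduct_smul, smul_eq_mul, hKy, hQ, hR',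
        hBg']
      ring
    have haA : a *ᵥ A = c • m + (al / Pp) • Bv - (al / (Pp * G)) • (μ₁ • H + μ₂ • K) := by
      rw [hA]
      simp only [Matrix.mulVec_add, Matrix.mulVec_smul, Matrix.mulVec_sub, mulVec_inv ha, hm,
        smul_smul]
      congr 3
      field_simp
    have hu1 : (H ⬝ᵥ A) * (Pp * G)
        = al * ((Pp + R * Z + Q * Y) * Bb - (P * Z + R * Y) * Bg) := by
      have : (H ⬝ᵥ A) * (Pp * G) = al * (G * Bb - (μ₁ * P + μ₂ * R)) := by
        rw [hHA]
        field_simp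
      rw [this, hμ₁, hμ₂, hGd]
      ring
    have hv1 : (K ⬝ᵥ A) * (Pp * G)
        = al * ((Pp + P * X + R * Z) * Bg - (R * X + Q * Z) * Bb) := by
      have : (K ⬝ᵥ A) * (Pp * G) = al * (G * Bg - (μ₁ * R + μ₂ * Q)) := by
        rw [hKA]
        field_simp
      rw [this, hμ₁, hμ₂, hGd]
      ring
    set u := H ⬝ᵥ A with hu
    set v := K ⬝ᵥ A with hv
    have hX : (X * u + Z * v) * (Pp * G) = al * Pp * μ₁ := by
      rw [hμ₁]
      linear_combination X * hu1 + Z * hv1 - al * (Q * Bb - R * Bg) * hJ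
    have hY : (Z * u + Y * v) * (Pp * G) = al * Pp * μ₂ := by
      rw [hμ₂]
      linear_combination Z * hu1 + Y * hv1 - al * (P * Bg - R * Bb) * hJ
    have e1 : X * u + Z * v = al * μ₁ / G := by
      field_simp
      have : Pp * ((X * u + Z * v) * G - al * μ₁) = 0 := by linear_combination hX
      rcases mul_eq_zero.1 this with h | h
      · exact absurd h hPi'
      · linarith
    have e2 : Z * u + Y * v = al * μ₂ / G := by
      field_simp
      have : Pp * ((Z * u + Y * v) * G - al * μ₂) = 0 := by linear_combination hY
      rcases mul_eq_zero.1 this with h | h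
      · exact absurd h hPi'
      · linarith
    constructor
    · rw [e1, e2, haA, hk]
      funext i
      simp only [Pi.add_apply, Pi.sub_apply, Pi.smul_apply, smul_eq_mul]
      field_simp
      ring
    · have hu2 : u = al * ((Pp + R * Z + Q * Y) * Bb - (P * Z + R * Y) * Bg) / (Pp * G) := by
        rw [← hu1]
        field_simp
      have hv2 : v = al * ((Pp + P * X + R * Z) * Bg - (R * X + Q * Z) * Bb) / (Pp * G) := by
        rw [← hv1]
        field_simp
      rw [hk, hc, hu2, hv2]
      field_simp
      ring

/-- unique solvability of the algebraic system `ℓ_{ir}A^r = B_i`, `ℓ_rA^r = B`. -/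
theorem statement11
    (n : ℕ) (hn : 2 ≤ n)
    (a : Matrix (Fin n) (Fin n) ℝ) (ha : a.PosDef)
    (bv gv : Fin n → ℝ) (b₀ g₀ : ℝ) (hb₀ : 0 < b₀) (hg₀ : 0 < g₀)
    (hb : Real.sqrt (quadInv a bv bv) < b₀)
    (hg : Real.sqrt (quadInv a gv gv) < g₀)
    (Ψ : ℝ → ℝ → ℝ)
    (hΨ : ContDiffOn ℝ (⊤ : ℕ∞) (fun p : ℝ × ℝ => Ψ p.1 p.2)
      (Set.Ioo (-b₀) b₀ ×ˢ Set.Ioo (-g₀) g₀))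
    (hΨpos : ∀ p ∈ Set.Ioo (-b₀) b₀ ×ˢ Set.Ioo (-g₀) g₀, 0 < Ψ p.1 p.2)
    (y : Fin n → ℝ) (hy : y ≠ 0)
    (hPi : 0 < PiF Ψ (sVar a bv y) (sVar a gv y))
    (hΓ : 0 < GammaF Ψ (quadInv a bv bv) (quadInv a gv gv) (quadInv a bv gv)
        (sVar a bv y) (sVar a gv y))
    (B : ℝ) (Bv : Fin n → ℝ) (hBv : ∑ i, Bv i * y i = 0) :
    (∃! A : Fin n → ℝ,
        (∀ i, ∑ r, pd2 (Fm a bv gv Ψ) y i r * A r = Bv i) ∧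
          (∑ r, pd (Fm a bv gv Ψ) y r * A r = B))
    ∧ (∀ A : Fin n → ℝ,
        ((∀ i, ∑ r, pd2 (Fm a bv gv Ψ) y i r * A r = Bv i) ∧
          (∑ r, pd (Fm a bv gv Ψ) y r * A r = B)) →
        ∀ p q Bq Gq Θq Brb Brg μ₁ μ₂ : ℝ,
          p = sVar a bv y → q = sVar a gv y →
          Bq = quadInv a bv bv → Gq = quadInv a gv gv → Θq = quadInv a bv gv →
          Brb = ∑ r, Bv r * (∑ l, a⁻¹ r l * bv l) →
          Brg = ∑ r, Bv r * (∑ l, a⁻¹ r l * gv l) →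
          μ₁ = (Ds (Ds Ψ) p q + (Gq - q ^ 2) * JF Ψ p q) * Brb
              + (Dt (Ds Ψ) p q - (Θq - p * q) * JF Ψ p q) * Brg →
          μ₂ = (Dt (Dt Ψ) p q + (Bq - p ^ 2) * JF Ψ p q) * Brg
              + (Dt (Ds Ψ) p q - (Θq - p * q) * JF Ψ p q) * Brb →
          ((∑ r, pd (alph a) y r * A r) =
            (1 / Ψ p q) *
              (B
                - (alph a y / (PiF Ψ p q * GammaF Ψ Bq Gq Θq p q)) *
                    (Ds Ψ p q *
                        (PiF Ψ p q + (Θq - p * q) * Dt (Ds Ψ) p q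
                          + (Gq - q ^ 2) * Dt (Dt Ψ) p q)
                      - Dt Ψ p q *
                        ((Θq - p * q) * Ds (Ds Ψ) p q
                          + (Gq - q ^ 2) * Dt (Ds Ψ) p q)) * Brb
                - (alph a y / (PiF Ψ p q * GammaF Ψ Bq Gq Θq p q)) *
                    (Dt Ψ p q *
                        (PiF Ψ p q + (Bq - p ^ 2) * Ds (Ds Ψ) p q
                          + (Θq - p * q) * Dt (Ds Ψ) p q)
                      - Ds Ψ p q *
                        ((Bq - p ^ 2) * Dt (Ds Ψ) p q
                          + (Θq - p * q) * Dt (Dt Ψ) p q)) * Brg))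
          ∧ (∀ i, A i =
              (∑ r, pd (alph a) y r * A r) * (y i / alph a y)
                + (alph a y / PiF Ψ p q) * (∑ l, a⁻¹ i l * Bv l)
                - (alph a y / (PiF Ψ p q * GammaF Ψ Bq Gq Θq p q)) *
                    (μ₁ * (∑ l, a⁻¹ i l * hl a bv y l)
                      + μ₂ * (∑ l, a⁻¹ i l * hl a gv y l)))) := by
  have hα := alph_pos ha hy
  have hU : IsOpen (Set.Ioo (-b₀) b₀ ×ˢ Set.Ioo (-g₀) g₀) := isOpen_Ioo.prod isOpen_Ioo
  have hm : ∀ z : Fin n → ℝ, z ≠ 0 →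
      (sVar a bv z, sVar a gv z) ∈ Set.Ioo (-b₀) b₀ ×ˢ Set.Ioo (-g₀) g₀ := fun z hz =>
    ⟨sVar_mem ha bv hz hb, sVar_mem ha gv hz hg⟩
  have hmα : ∀ i, pd (alph a) y i = mC a y i := fun i => (hasGrad_alph ha hy).pd_eq i
  have hpd := fun j => pd_Fm bv gv ha hU hΨ hm hy j
  have hpd2 := fun i j => pd2_Fm bv gv ha hU hΨ hm hy i j
  have hPs : 0 < Ψ (sVar a bv y) (sVar a gv y) := hΨpos _ (hm y hy)
  have hhl : ∀ v : Fin n → ℝ, hl a v y = v - sVar a v y • mC a y := by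
    intro v
    funext i
    simp [hl, hmα]
  have hhy : ∀ v : Fin n → ℝ, hl a v y ⬝ᵥ y = 0 := by
    intro v
    rw [hhl, sub_dotProduct, smul_dotProduct, mC_dot ha hy, dot_y ha v hy, smul_eq_mul, sub_self]
  have hBy : Bv ⬝ᵥ y = 0 := hBv
  have hBh : ∀ v : Fin n → ℝ, Bv ⬝ᵥ Matrix.mulVec a⁻¹ (hl a v y)
      = ∑ r, Bv r * (∑ l, a⁻¹ r l * v l) := by
    intro v
    rw [hhl, Matrix.mulVec_sub, Matrix.mulVec_smul, inv_mC ha hy, dotProduct_sub, dotProduct_smul,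
      dotProduct_smul, hBy, smul_zero, smul_zero, sub_zero]
    rfl
  have hpair : ∀ u v : Fin n → ℝ, hl a u y ⬝ᵥ Matrix.mulVec a⁻¹ (hl a v y)
      = quadInv a u v - sVar a u y * sVar a v y := by
    intro u v
    rw [hhl, hhl, h_pair ha u v hy]
  have hJ : PiF Ψ (sVar a bv y) (sVar a gv y) * JF Ψ (sVar a bv y) (sVar a gv y)
      = Ds (Ds Ψ) (sVar a bv y) (sVar a gv y) * Dt (Dt Ψ) (sVar a bv y) (sVar a gv y)
        - Dt (Ds Ψ) (sVar a bv y) (sVar a gv y) ^ 2 := by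
    rw [JF]
    field_simp
  have hrow : ∀ A : Fin n → ℝ, (∀ i, ∑ r, pd2 (Fm a bv gv Ψ) y i r * A r = Bv i) ↔
      PiF Ψ (sVar a bv y) (sVar a gv y) • (Matrix.mulVec a A - (mC a y ⬝ᵥ A) • mC a y) +
        (Ds (Ds Ψ) (sVar a bv y) (sVar a gv y) * (hl a bv y ⬝ᵥ A) +
          Dt (Ds Ψ) (sVar a bv y) (sVar a gv y) * (hl a gv y ⬝ᵥ A)) • hl a bv y +
        (Dt (Ds Ψ) (sVar a bv y) (sVar a gv y) * (hl a bv y ⬝ᵥ A) +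
          Dt (Dt Ψ) (sVar a bv y) (sVar a gv y) * (hl a gv y ⬝ᵥ A)) • hl a gv y
        = alph a y • Bv := by
    intro A
    rw [funext_iff]
    refine forall_congr' fun i => ?_
    have e : alph a y * ∑ r, pd2 (Fm a bv gv Ψ) y i r * A r =
      (PiF Ψ (sVar a bv y) (sVar a gv y) • (Matrix.mulVec a A - (mC a y ⬝ᵥ A) • mC a y) +
        (Ds (Ds Ψ) (sVar a bv y) (sVar a gv y) * (hl a bv y ⬝ᵥ A) +
          Dt (Ds Ψ) (sVar a bv y) (sVar a gv y) * (hl a gv y ⬝ᵥ A)) • hl a bv y +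
        (Dt (Ds Ψ) (sVar a bv y) (sVar a gv y) * (hl a bv y ⬝ᵥ A) +
          Dt (Dt Ψ) (sVar a bv y) (sVar a gv y) * (hl a gv y ⬝ᵥ A)) • hl a gv y) i := by
      simp only [Pi.add_apply, Pi.sub_apply, Pi.smul_apply, smul_eq_mul, Matrix.mulVec, dotProduct,
        Finset.mul_sum, Finset.sum_mul, ← Finset.sum_add_distrib, ← Finset.sum_sub_distrib]
      refine Finset.sum_congr rfl fun r _ => ?_
      rw [hpd2, hl, hl, hl, hl, hmα, hmα]
      field_simp
      ring
    rw [← e, Pi.smul_apply, smul_eq_mul]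
    exact (mul_right_inj' hα.ne').symm
  have hlin : ∀ A : Fin n → ℝ, (∑ r, pd (Fm a bv gv Ψ) y r * A r = B) ↔
      Ψ (sVar a bv y) (sVar a gv y) * (mC a y ⬝ᵥ A)
        + Ds Ψ (sVar a bv y) (sVar a gv y) * (hl a bv y ⬝ᵥ A)
        + Dt Ψ (sVar a bv y) (sVar a gv y) * (hl a gv y ⬝ᵥ A) = B := by
    intro A
    have e : ∑ r, pd (Fm a bv gv Ψ) y r * A r = Ψ (sVar a bv y) (sVar a gv y) * (mC a y ⬝ᵥ A)
        + Ds Ψ (sVar a bv y) (sVar a gv y) * (hl a bv y ⬝ᵥ A)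
        + Dt Ψ (sVar a bv y) (sVar a gv y) * (hl a gv y ⬝ᵥ A) := by
      simp only [dotProduct, Finset.mul_sum, ← Finset.sum_add_distrib]
      refine Finset.sum_congr rfl fun r _ => ?_
      rw [hpd, hl, hl, hmα]
      ring
    rw [e]
  have key := core ha y (mC a y) (hl a bv y) (hl a gv y) Bv (alph a y) _ _ _ _ _ _ _ _ _ _ _ _
    (Ds Ψ (sVar a bv y) (sVar a gv y)) (Dt Ψ (sVar a bv y) (sVar a gv y)) B _ _ _
    hα hPi hΓ hPs (mulVec_y ha hy) (mC_dot ha hy) (hhy bv) (hhy gv) hBy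
    ((hpair bv bv).trans (by rw [← pow_two])) ((hpair gv gv).trans (by rw [← pow_two]))
    (hpair bv gv) (hBh bv) (hBh gv) hJ rfl rfl rfl rfl
  have hsys : ∀ A : Fin n → ℝ, ((∀ i, ∑ r, pd2 (Fm a bv gv Ψ) y i r * A r = Bv i) ∧
          (∑ r, pd (Fm a bv gv Ψ) y r * A r = B)) ↔ _ := fun A =>
    Iff.trans (and_congr (hrow A) (hlin A)) (key A).1
  · refine ⟨⟨_, (hsys _).2 rfl, fun A hA => (hsys A).1 hA⟩, ?_⟩
    intro A hA p q Bq Gq Θq Brb Brg μ₁ μ₂ hp hq hBq hGq hΘq hBrb hBrg hμ₁ hμ₂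
    subst hp hq hBq hGq hΘq hBrb hBrg hμ₁ hμ₂
    have hA1 := (hsys A).1 hA
    have hA2 := (key A).2 hA1
    have hsum : ∑ r, pd (alph a) y r * A r = mC a y ⬝ᵥ A := by
      simp only [hmα]
      rfl
    rw [hsum]
    refine ⟨hA2, fun i => ?_⟩
    rw [hA2]
    refine (congrFun hA1 i).trans ?_
    simp only [Pi.add_apply, Pi.sub_apply, Pi.smul_apply, smul_eq_mul, Matrix.mulVec, dotProduct]
    ring
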